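/- Let V be a finite set, f : 2^V → ℝ a monotone function with f(S) ≥ 0 for all S, a partition matroid constraint with d = Σ_i d_i and d̄ = min_i d_i, and OPT a feasible maximizer of f. Let X₀ = ∅ and X_{j+1} = X_j ∪ {v_j}, where v_j maximizes f(X_j∪{v}) over all v ∈ V∖X_j with X_j∪{v} feasible. Then for every integer m with 0 ≤ m ≤ d̄ and every γ with 0 ≤ γ ≤ 1 that is a submodularity-ratio lower bound for f with parameters (m, d), one has f(X_m) ≥ (1 − e^{−γm/d})·f(OPT). -/

import Mathlib

/-!
Fix a set `T` with at most `d` elements. While the greedy set `X` is small enough for every single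
element to be added feasibly, the greedy gain dominates the marginal gain of each element of
`T \ X`, and by the submodularity ratio these at most `d` marginal gains add up to at least
`γ (f T - f X)`. So each greedy step multiplies the gap `f T - f X` by at most `1 - γ / d`, hence
after `m` steps it is at most `(1 - γ / d) ^ m ≤ exp (-γ m / d)` times the initial gap.
-/

/-- `S` satisfies the partition matroid constraint with blocks `B i` and thresholds `D i`. The
blocks are not required to be disjoint or to cover `V`. -/
def IsPartitionFeasible {V ι : Type*} [DecidableEq V] (B : ι → Finset V) (D : ι → ℕ)
    (S : Finset V) : Prop :=
  ∀ i, (S ∩ B i).card ≤ D i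

/-- `γ` is a submodularity-ratio lower bound for `f` with parameters `(s, t)`: the marginal gains
over a set `X` with fewer than `s` elements of the elements of a set `L` with at most `t` elements
add up to at least `γ` times the joint gain of `L` over `X`. -/
def IsSubmodularityRatioBound {V : Type*} [DecidableEq V] (f : Finset V → ℝ) (γ : ℝ)
    (s t : ℕ) : Prop :=
  ∀ X L : Finset V, Disjoint X L → X.card < s → L.card ≤ t →
    γ * (f (X ∪ L) - f X) ≤ ∑ v ∈ L, (f (insert v X) - f X)

/-- `Y` arises from `X` by a greedy step: it adds a new element that maximizes `f` among all the
new elements whose addition gives a feasible set. -/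
def IsGreedyStep {V : Type*} [DecidableEq V] (Feasible : Finset V → Prop) (f : Finset V → ℝ)
    (X Y : Finset V) : Prop :=
  ∃ v ∉ X, Y = insert v X ∧ Feasible (insert v X) ∧
    ∀ w ∉ X, Feasible (insert w X) → f (insert w X) ≤ f (insert v X)

/-- The first `n` steps of a run of the greedy algorithm started at `∅`; the sets `X j` with
`n < j` are arbitrary. -/
structure IsGreedyChain {V : Type*} [DecidableEq V] (Feasible : Finset V → Prop)
    (f : Finset V → ℝ) (X : ℕ → Finset V) (n : ℕ) : Prop where
  zero : X 0 = ∅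
  step : ∀ j < n, IsGreedyStep Feasible f (X j) (X (j + 1))

section

variable {V : Type*} [DecidableEq V] {Feasible : Finset V → Prop} {f : Finset V → ℝ} {γ : ℝ}
  {T X Y : Finset V} {s d : ℕ}

namespace IsPartitionFeasible

variable {ι : Type*} {B : ι → Finset V} {D : ι → ℕ}

theorem of_card_le (hT : ∀ i, T.card ≤ D i) : IsPartitionFeasible B D T := fun i =>
  (Finset.card_le_card Finset.inter_subset_left).trans (hT i)

theorem card_le_sum [Fintype ι] (h : IsPartitionFeasible B D T) (hcover : ∀ v ∈ T, ∃ i, v ∈ B i) :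
    T.card ≤ ∑ i, D i := by
  have hsub : T ⊆ Finset.univ.biUnion B := fun v hv => by simpa using hcover v hv
  calc T.card = (Finset.univ.biUnion fun i => T ∩ B i).card := by
        rw [← Finset.inter_biUnion, Finset.inter_eq_left.2 hsub]
    _ ≤ ∑ i, (T ∩ B i).card := Finset.card_biUnion_le
    _ ≤ ∑ i, D i := Finset.sum_le_sum fun i _ => h i

end IsPartitionFeasible

theorem IsSubmodularityRatioBound.mul_sub_le_sum_sdiff (hγ : IsSubmodularityRatioBound f γ s d)
    (hγ0 : 0 ≤ γ) (hf : Monotone f) (hX : X.card < s) (hT : T.card ≤ d) :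
    γ * (f T - f X) ≤ ∑ w ∈ T \ X, (f (insert w X) - f X) := by
  have hT_le : f T ≤ f (X ∪ T \ X) := hf <| by
    rw [Finset.union_sdiff_self_eq_union]
    exact Finset.subset_union_right
  calc γ * (f T - f X) ≤ γ * (f (X ∪ T \ X) - f X) := by gcongr
    _ ≤ ∑ w ∈ T \ X, (f (insert w X) - f X) :=
      hγ X (T \ X) Finset.disjoint_sdiff hX ((Finset.card_le_card Finset.sdiff_subset).trans hT)

namespace IsGreedyStep

theorem card_eq (h : IsGreedyStep Feasible f X Y) : Y.card = X.card + 1 := by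
  obtain ⟨v, hv, rfl, -⟩ := h
  exact Finset.card_insert_of_notMem hv

theorem subset (h : IsGreedyStep Feasible f X Y) : X ⊆ Y := by
  obtain ⟨v, -, rfl, -⟩ := h
  exact Finset.subset_insert v X

theorem apply_insert_le (h : IsGreedyStep Feasible f X Y) {w : V} (hw : w ∉ X)
    (hfeas : Feasible (insert w X)) : f (insert w X) ≤ f Y := by
  obtain ⟨v, -, rfl, -, hmax⟩ := h
  exact hmax w hw hfeas

theorem sum_sdiff_le_mul_sub (h : IsGreedyStep Feasible f X Y) (hf : Monotone f)
    (hfeas : ∀ w ∈ T \ X, Feasible (insert w X)) (hT : T.card ≤ d) :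
    ∑ w ∈ T \ X, (f (insert w X) - f X) ≤ d * (f Y - f X) := by
  have hgain : 0 ≤ f Y - f X := sub_nonneg.2 (hf h.subset)
  have hcard : (T \ X).card ≤ d := (Finset.card_le_card Finset.sdiff_subset).trans hT
  calc ∑ w ∈ T \ X, (f (insert w X) - f X) ≤ (T \ X).card • (f Y - f X) :=
        Finset.sum_le_card_nsmul _ _ _ fun w hw =>
          sub_le_sub_right (h.apply_insert_le (Finset.mem_sdiff.1 hw).2 (hfeas w hw)) _
    _ = (T \ X).card * (f Y - f X) := nsmul_eq_mul _ _
    _ ≤ d * (f Y - f X) := by gcongr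

theorem sub_le_one_sub_div_mul_sub (h : IsGreedyStep Feasible f X Y) (hf : Monotone f)
    (hγ : IsSubmodularityRatioBound f γ s d) (hγ0 : 0 ≤ γ) (hX : X.card < s)
    (hfeas : ∀ w ∈ T \ X, Feasible (insert w X)) (hd : 0 < d) (hT : T.card ≤ d) :
    f T - f Y ≤ (1 - γ / d) * (f T - f X) := by
  have hgain : γ * (f T - f X) ≤ d * (f Y - f X) :=
    (hγ.mul_sub_le_sum_sdiff hγ0 hf hX hT).trans (h.sum_sdiff_le_mul_sub hf hfeas hT)
  have hgain_div : γ / d * (f T - f X) ≤ f Y - f X := by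
    rwa [div_mul_eq_mul_div, div_le_iff₀' (Nat.cast_pos.2 hd)]
  linarith

end IsGreedyStep

namespace IsGreedyChain

variable {X : ℕ → Finset V} {m n : ℕ}

theorem card_eq (h : IsGreedyChain Feasible f X n) {j : ℕ} (hj : j ≤ n) : (X j).card = j := by
  induction j with
  | zero => rw [h.zero, Finset.card_empty]
  | succ j ih => rw [(h.step j hj).card_eq, ih (Nat.le_of_succ_le hj)]

theorem sub_le_one_sub_div_pow_mul_sub (h : IsGreedyChain Feasible f X m) (hf : Monotone f)
    (hfeas : ∀ S : Finset V, S.card ≤ m → Feasible S) (hγ : IsSubmodularityRatioBound f γ m d)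
    (hγ0 : 0 ≤ γ) (hγd : γ ≤ d) (hd : 0 < d) (hT : T.card ≤ d) :
    f T - f (X m) ≤ (1 - γ / d) ^ m * (f T - f ∅) := by
  have hfactor : 0 ≤ 1 - γ / d := sub_nonneg.2 (div_le_one_of_le₀ hγd d.cast_nonneg)
  have hcontract : ∀ j < m, f T - f (X (j + 1)) ≤ (1 - γ / d) * (f T - f (X j)) := by
    intro j hj
    have hcard : (X j).card = j := h.card_eq hj.le
    have hinsert_feas : ∀ w ∈ T \ X j, Feasible (insert w (X j)) := fun w _ =>
      hfeas _ ((Finset.card_insert_le w (X j)).trans (by omega))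
    exact (h.step j hj).sub_le_one_sub_div_mul_sub hf hγ hγ0 (hcard.trans_lt hj) hinsert_feas hd hT
  simpa only [h.zero] using le_geom (u := fun j => f T - f (X j)) hfactor m hcontract

end IsGreedyChain

theorem one_sub_pow_le_exp_neg_mul {x : ℝ} (hx : x ≤ 1) (m : ℕ) :
    (1 - x) ^ m ≤ Real.exp (-(x * m)) :=
  calc (1 - x) ^ m ≤ Real.exp (-x) ^ m :=
        pow_le_pow_left₀ (sub_nonneg.2 hx) (Real.one_sub_le_exp_neg x) m
    _ = Real.exp (-(x * m)) := by rw [← Real.exp_nat_mul, mul_neg, mul_comm]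

theorem greedy_chain_monotone_exp_general {X : ℕ → Finset V} {m : ℕ} (hf : Monotone f)
    (hf_empty : 0 ≤ f ∅) (hX : IsGreedyChain Feasible f X m)
    (hfeas : ∀ S : Finset V, S.card ≤ m → Feasible S) (hγ : IsSubmodularityRatioBound f γ m d)
    (hγ0 : 0 ≤ γ) (hγd : γ ≤ d) (hd : 0 < d) (hT : T.card ≤ d) :
    f (X m) ≥ (1 - Real.exp (-(γ * m) / d)) * f T := by
  have hfactor : (1 - γ / d) ^ m ≤ Real.exp (-(γ * m) / d) := by
    rw [neg_div, mul_div_right_comm]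
    exact one_sub_pow_le_exp_neg_mul (div_le_one_of_le₀ hγd d.cast_nonneg) m
  have hgap_nonneg : 0 ≤ f T - f ∅ := sub_nonneg.2 (hf T.empty_subset)
  have hgap : f T - f (X m) ≤ Real.exp (-(γ * m) / d) * f T :=
    calc f T - f (X m) ≤ (1 - γ / d) ^ m * (f T - f ∅) :=
          hX.sub_le_one_sub_div_pow_mul_sub hf hfeas hγ hγ0 hγd hd hT
      _ ≤ Real.exp (-(γ * m) / d) * (f T - f ∅) := by gcongr
      _ ≤ Real.exp (-(γ * m) / d) * f T := by gcongr; exact sub_le_self _ hf_empty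
  linarith

end

/-- Exponential-form approximation guarantee of the greedy chain for monotone `f`:
for every `m ≤ d̄` and every submodularity-ratio lower bound `γ ∈ [0,1]` with
parameters `(m, d)`, one has `f X_m ≥ (1 - e^{-γm/d})·f OPT`. -/
theorem greedy_chain_monotone_exp {V : Type*} [Fintype V] [DecidableEq V] {k : ℕ}
    (hk : 0 < k)
    (B : Fin k → Finset V) (hpart : ∀ v : V, ∃! i, v ∈ B i)
    (hBne : ∀ i, (B i).Nonempty)
    (D : Fin k → ℕ) (hD : ∀ i, 1 ≤ D i ∧ D i ≤ (B i).card)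
    (dbar : ℕ)
    (hdbar : dbar = Finset.univ.inf' ⟨⟨0, hk⟩, Finset.mem_univ _⟩ D)
    (f : Finset V → ℝ) (hf0 : ∀ S, 0 ≤ f S)
    (hmono : ∀ X Y : Finset V, X ⊆ Y → f X ≤ f Y)
    (OPT : Finset V) (hOPTfeas : ∀ i, (OPT ∩ B i).card ≤ D i)
    (hOPTmax : ∀ S : Finset V, (∀ i, (S ∩ B i).card ≤ D i) → f S ≤ f OPT)
    (Xc : ℕ → Finset V) (hX0 : Xc 0 = ∅)
    (hstep : ∀ j < dbar, ∃ v ∉ Xc j,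
      Xc (j + 1) = insert v (Xc j) ∧
      (∀ i, ((insert v (Xc j)) ∩ B i).card ≤ D i) ∧
      ∀ w ∉ Xc j, (∀ i, ((insert w (Xc j)) ∩ B i).card ≤ D i) →
        f (insert w (Xc j)) ≤ f (insert v (Xc j)))
    (m : ℕ) (hm : m ≤ dbar)
    (γ : ℝ) (hγ0 : 0 ≤ γ) (hγ1 : γ ≤ 1)
    (hγ : ∀ S L : Finset V, Disjoint S L → S.card < m → L.card ≤ ∑ i, D i →
      γ * (f (S ∪ L) - f S) ≤ ∑ v ∈ L, (f (insert v S) - f S)) :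
    f (Xc m) ≥ (1 - Real.exp (-(γ * m) / (∑ i, D i : ℝ))) * f OPT := by
  have hm_le (i : Fin k) : m ≤ D i := hm.trans (hdbar ▸ Finset.inf'_le D (Finset.mem_univ i))
  have hd : 1 ≤ ∑ i, D i :=
    (hD ⟨0, hk⟩).1.trans (Finset.single_le_sum_of_canonicallyOrdered (Finset.mem_univ _))
  have hOPTcard : OPT.card ≤ ∑ i, D i :=
    IsPartitionFeasible.card_le_sum hOPTfeas fun v _ => (hpart v).exists
  have hchain : IsGreedyChain (IsPartitionFeasible B D) f Xc m :=
    ⟨hX0, fun j hj => hstep j (hj.trans_le hm)⟩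
  rw [← Nat.cast_sum]
  exact greedy_chain_monotone_exp_general hmono (hf0 ∅) hchain
    (fun S hS => .of_card_le fun i => hS.trans (hm_le i)) hγ hγ0
    (hγ1.trans (Nat.one_le_cast.2 hd)) hd hOPTcard
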